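/- Let N be an even positive integer and p an integer with 2 ≤ p ≤ N/2; assume u^p[2n]² + v^p[2n]² > 0 for every n. Define the first-level complementary wavelet packets φ_{[1],λ}^p = C(ψ_{[1],λ}^p), λ = 0,1. Then the N signals {φ_{[1],0}^p[·−2l] : 0 ≤ l < N/2} ∪ {φ_{[1],1}^p[·−2l] : 0 ≤ l < N/2} form an orthonormal basis of Π[N]; consequently, for λ ∈ {0,1}, the orthogonal projection of any x ∈ Π[N] onto span{φ_{[1],λ}^p[·−2l] : 0 ≤ l < N/2} equals Σ_{l=0}^{N/2−1} ⟨x, φ_{[1],λ}^p[·−2l]⟩·φ_{[1],λ}^p[·−2l]. -/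

import Mathlib

open MeasureTheory

namespace WP

/-- The root of unity ω = e^{2πi/N}. -/
noncomputable def ww (N : ℕ) : ℂ := Complex.exp (2 * Real.pi * Complex.I / N)

/-- DFT of a signal `x ∈ Π[N]`: x̂[n] = Σ_{k=0}^{N−1} ω^{−kn} x[k]. -/
noncomputable def dft (N : ℕ) (x : ℤ → ℂ) (n : ℤ) : ℂ :=
  ∑ k ∈ Finset.range N, ww N ^ (-((k : ℤ) * n)) * x k

/-- Inner product on `Π[N]`. -/
noncomputable def inner1 (N : ℕ) (x y : ℤ → ℂ) : ℂ :=
  ∑ k ∈ Finset.range N, x k * (starRingEnd ℂ) (y k)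

/-- The discrete periodic Hilbert transform, defined via the DFT:
    Ĥ(x)[n] = −i·x̂[n] for 0<n<N/2, i·x̂[n] for N/2<n<N, 0 at n=0 and n=N/2. -/
noncomputable def hilbertT (N : ℕ) (x : ℤ → ℂ) (k : ℤ) : ℂ :=
  (N : ℂ)⁻¹ * ∑ n ∈ Finset.range N,
    (if 0 < n ∧ n < N / 2 then -Complex.I else if N / 2 < n ∧ n < N then Complex.I else 0) *
      dft N x n * ww N ^ ((k * (n : ℤ)))

/-- The complementary-WP operator `C`, defined via the DFT:
    Ĉ(x)[n] = −i·x̂[n] for 0<n<N/2, i·x̂[n] for N/2<n<N, x̂[0] at 0, x̂[N/2] at N/2. -/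
noncomputable def cwpT (N : ℕ) (x : ℤ → ℂ) (k : ℤ) : ℂ :=
  (N : ℂ)⁻¹ * ∑ n ∈ Finset.range N,
    (if n = 0 ∨ n = N / 2 then 1 else if n < N / 2 then -Complex.I else Complex.I) *
      dft N x n * ww N ^ ((k * (n : ℤ)))

/-- The order-p B-spline b^p(t). -/
noncomputable def bspline (p : ℕ) (t : ℝ) : ℝ :=
  (1 / (Nat.factorial (p - 1) : ℝ)) *
    ∑ k ∈ Finset.range (p + 1),
      (-1 : ℝ) ^ k * (p.choose k : ℝ) * max (t + (p : ℝ) / 2 - (k : ℝ)) 0 ^ (p - 1)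

/-- u^p[n] = Σ_{k=−N/2}^{N/2−1} ω^{−kn} b^p(k). -/
noncomputable def uSeq (N p : ℕ) (n : ℤ) : ℂ :=
  ∑ k ∈ Finset.range N,
    ww N ^ (-(((k : ℤ) - (N : ℤ) / 2) * n)) * (bspline p ((k : ℝ) - (N : ℝ) / 2) : ℂ)

/-- v^p[n] = e^{−πin/N} Σ_{k=−N/2}^{N/2−1} ω^{−kn} b^p(k+1/2). -/
noncomputable def vSeq (N p : ℕ) (n : ℤ) : ℂ :=
  Complex.exp (-Real.pi * Complex.I * n / N) *
    ∑ k ∈ Finset.range N,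
      ww N ^ (-(((k : ℤ) - (N : ℤ) / 2) * n)) *
        (bspline p ((k : ℝ) - (N : ℝ) / 2 + 1 / 2) : ℂ)

/-- The span-two discrete-time B-spline b_{[1]}^p ∈ Π[N]:
    the N-periodic signal with b_{[1]}^p[k] = b^p(k/2)/2 for −N/2 ≤ k ≤ N/2−1. -/
noncomputable def bs1 (N p : ℕ) (k : ℤ) : ℂ :=
  ((bspline p ((((k + (N : ℤ) / 2) % (N : ℤ) - (N : ℤ) / 2 : ℤ) : ℝ) / 2) : ℝ) : ℂ) / 2

/-- Its DFT b̂_{[1]}^p[n] = Σ_{k=−N/2}^{N/2−1} ω^{−kn} b_{[1]}^p[k]. -/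
noncomputable def bhat1 (N p : ℕ) (n : ℤ) : ℂ :=
  ∑ k ∈ Finset.range N,
    ww N ^ (-(((k : ℤ) - (N : ℤ) / 2) * n)) * bs1 N p ((k : ℤ) - (N : ℤ) / 2)

/-- Υ^p[n] = (u^p[2n]² + v^p[2n]²)/4. -/
noncomputable def upsilon (N p : ℕ) (n : ℤ) : ℂ :=
  (uSeq N p (2 * n) ^ 2 + vSeq N p (2 * n) ^ 2) / 4

/-- β[n] = b̂_{[1]}^p[n] / √(Υ^p[n]). -/
noncomputable def betaS (N p : ℕ) (n : ℤ) : ℂ := bhat1 N p n / upsilon N p n ^ ((1 : ℂ) / 2)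

/-- α[n] = ω^n · β[n+N/2]. -/
noncomputable def alphaS (N p : ℕ) (n : ℤ) : ℂ := ww N ^ n * betaS N p (n + (N : ℤ) / 2)

/-- The first-level wavelet packets ψ_{[1],λ}^p, λ = 0,1, defined via their DFTs
    ψ̂_{[1],0}^p[n] = β[n] and ψ̂_{[1],1}^p[n] = α[n]. -/
noncomputable def psi1 (N p lam : ℕ) (k : ℤ) : ℂ :=
  (N : ℂ)⁻¹ * ∑ n ∈ Finset.range N,
    (if lam = 0 then betaS N p n else alphaS N p n) * ww N ^ ((k * (n : ℤ)))


open scoped ComplexOrder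

/-!
The operator `C` multiplies the DFT by numbers of modulus one, so it is unitary and commutes with
shifts; it is therefore enough to treat the wavelet packets `ψ_{[1],λ}` themselves. With `N = 2M`,
Parseval's identity and the orthogonality of the characters of `ℤ/M` reduce orthonormality of the
two-sample shifts to
`ψ̂_λ[n] conj ψ̂_μ[n] + ψ̂_λ[n+M] conj ψ̂_μ[n+M] = 2 δ_{λμ}`.
Splitting `b̂_{[1]}` into even and odd samples gives `b̂_{[1]}[n] = (u[2n] + v[2n]) / 2`. A shift of
`n` by `M` fixes `u[2n]` and changes the sign of `v[2n]`, so
`b̂_{[1]}[n+M] = (u[2n] - v[2n]) / 2` and `β[n]² + β[n+M]² = 2`. Symmetry of the spline, together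
with `p ≤ M` (which keeps the asymmetric sample `k = -M` from contributing), makes `b̂_{[1]}` real,
and hence also `β`, as `Υ > 0`. The factor `ω^n` in `α`, which changes sign under `n ↦ n + M`, makes
the two packets orthogonal.
-/

section Development

open Finset
open scoped ComplexConjugate

section FiniteSums

variable {α : Type*} [AddCommMonoid α]

lemma sum_range_two_mul_sub (f : ℤ → α) (M : ℕ) :
    ∑ k ∈ range (2 * M), f (k - M) = ∑ k ∈ Ico (-(M : ℤ)) M, f k :=
  sum_nbij' (fun k => (k : ℤ) - M) (fun k => (k + M).toNat) (by grind) (by grind) (by grind)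
    (by grind) (by grind)

lemma sum_Ico_two_mul (f : ℤ → α) (a b : ℤ) :
    ∑ k ∈ Ico (2 * a) (2 * b), f k = ∑ k ∈ Ico a b, (f (2 * k) + f (2 * k + 1)) := by
  rw [← sum_fiberwise_of_maps_to (g := (· / 2)) (t := Ico a b) (by grind)]
  refine sum_congr rfl fun j hj => ?_
  have hfiber : {k ∈ Ico (2 * a) (2 * b) | k / 2 = j} = {2 * j, 2 * j + 1} := by grind
  rw [hfiber, sum_pair (by omega)]

end FiniteSums

section RootsOfUnity

variable {N M : ℕ}

lemma ww_ne_zero : ww N ≠ 0 := Complex.exp_ne_zero _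

lemma isPrimitiveRoot_ww (hN : N ≠ 0) : IsPrimitiveRoot (ww N) N :=
  Complex.isPrimitiveRoot_exp N hN

lemma conj_ww_zpow (j : ℤ) : conj (ww N ^ j) = ww N ^ (-j) := by
  have hconj : conj (ww N) = (ww N)⁻¹ := by
    simp [ww, ← Complex.exp_conj, ← Complex.exp_neg, neg_div, map_ofNat]
  rw [map_zpow₀, hconj, inv_zpow']

lemma ww_zpow_natCast_mul (j : ℤ) : ww N ^ ((N : ℤ) * j) = 1 := by
  rcases eq_or_ne N 0 with rfl | hN
  · simp
  · exact ((isPrimitiveRoot_ww hN).zpow_eq_one_iff_dvd _).2 (dvd_mul_right _ _)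

lemma ww_zpow_mul_add_period (k n : ℤ) : ww N ^ (-(k * (n + N))) = ww N ^ (-(k * n)) := by
  rw [show -(k * (n + N)) = N * -k + -(k * n) by ring, zpow_add₀ ww_ne_zero, ww_zpow_natCast_mul,
    one_mul]

lemma ww_two_mul_zpow_two_mul (j : ℤ) : ww (2 * M) ^ (2 * j) = ww M ^ j := by
  have hsq : ww (2 * M) ^ (2 : ℤ) = ww M := by
    rw [ww, ww, ← Complex.exp_int_mul]
    push_cast
    rw [← mul_div_assoc, mul_assoc 2 (Real.pi : ℂ), mul_div_mul_left _ _ two_ne_zero]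
  rw [zpow_mul, hsq]

lemma ww_two_mul_zpow_self (hM : M ≠ 0) : ww (2 * M) ^ (M : ℤ) = -1 := by
  have hMC : (M : ℂ) ≠ 0 := Nat.cast_ne_zero.2 hM
  rw [ww, ← Complex.exp_int_mul, ← Complex.exp_pi_mul_I]
  push_cast
  field_simp

lemma sum_ww_zpow_mul (j : ℤ) :
    ∑ k ∈ range N, ww N ^ (k * j) = if (N : ℤ) ∣ j then (N : ℂ) else 0 := by
  rcases eq_or_ne N 0 with rfl | hN
  · simp
  have hdvd := (isPrimitiveRoot_ww hN).zpow_eq_one_iff_dvd j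
  have hpow (k : ℕ) : ww N ^ (k * j) = (ww N ^ j) ^ k := by
    rw [mul_comm, zpow_mul, zpow_natCast]
  simp only [hpow]
  split_ifs with h
  · simp [hdvd.2 h]
  · rw [geom_sum_eq (mt hdvd.1 h), ← hpow, ww_zpow_natCast_mul, sub_self, zero_div]

lemma sum_ww_zpow_mul_sub {l m : ℕ} (hl : l < N) (hm : m < N) :
    ∑ k ∈ range N, ww N ^ (k * ((m : ℤ) - l)) = if l = m then (N : ℂ) else 0 := by
  have hiff : (N : ℤ) ∣ (m : ℤ) - l ↔ l = m :=
    Nat.modEq_iff_dvd.symm.trans ⟨fun h => h.eq_of_lt_of_lt hl hm, fun h => h ▸ rfl⟩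
  simp only [sum_ww_zpow_mul, hiff]

end RootsOfUnity

section DiscreteFourierTransform

variable {N : ℕ}

/-- The inverse DFT: the `N`-periodic signal whose DFT takes the values `f n` for `0 ≤ n < N`. -/
noncomputable def idft (N : ℕ) (f : ℕ → ℂ) (k : ℤ) : ℂ :=
  (N : ℂ)⁻¹ * ∑ n ∈ range N, f n * ww N ^ (k * (n : ℤ))

lemma dft_idft (f : ℕ → ℂ) {n : ℕ} (hn : n < N) : dft N (idft N f) n = f n := by
  have hN : (N : ℂ) ≠ 0 := Nat.cast_ne_zero.2 (by omega)
  calc dft N (idft N f) n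
      = ∑ k ∈ range N, ∑ m ∈ range N, (N : ℂ)⁻¹ * f m * ww N ^ ((k : ℤ) * ((m : ℤ) - n)) := by
        refine sum_congr rfl fun k _ => ?_
        rw [idft, mul_sum, mul_sum]
        refine sum_congr rfl fun m _ => ?_
        rw [mul_sub, sub_eq_neg_add, zpow_add₀ ww_ne_zero]
        ring
    _ = ∑ m ∈ range N, (N : ℂ)⁻¹ * f m * if n = m then (N : ℂ) else 0 := by
        rw [sum_comm]
        refine sum_congr rfl fun m hm => ?_
        rw [← mul_sum, sum_ww_zpow_mul_sub hn (mem_range.1 hm)]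
    _ = f n := by
        simp only [mul_ite, mul_zero, sum_ite_eq, mem_range, hn, if_true]
        field_simp

lemma inner1_idft_right (x : ℤ → ℂ) (g : ℕ → ℂ) :
    inner1 N x (idft N g) = (N : ℂ)⁻¹ * ∑ n ∈ range N, dft N x n * conj (g n) := by
  simp only [inner1, idft, dft, map_mul, map_sum, map_inv₀, map_natCast, conj_ww_zpow, mul_sum,
    sum_mul]
  rw [sum_comm]
  exact sum_congr rfl fun n _ => sum_congr rfl fun k _ => by ring

lemma inner1_idft_idft (f g : ℕ → ℂ) :
    inner1 N (idft N f) (idft N g) = (N : ℂ)⁻¹ * ∑ n ∈ range N, f n * conj (g n) := by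
  rw [inner1_idft_right]
  congr 1
  exact sum_congr rfl fun n hn => by rw [dft_idft f (mem_range.1 hn)]

lemma idft_shift (f : ℕ → ℂ) (a : ℤ) :
    (fun k => idft N f (k - a)) = idft N fun n => f n * ww N ^ (-(a * n)) := by
  funext k
  simp only [idft, mul_assoc, ← zpow_add₀ ww_ne_zero]
  ring_nf

lemma inner1_idft_shift (f g : ℕ → ℂ) (a b : ℤ) :
    inner1 N (fun k => idft N f (k - a)) (fun k => idft N g (k - b)) =
      (N : ℂ)⁻¹ * ∑ n ∈ range N, f n * conj (g n) * ww N ^ ((b - a) * n) := by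
  rw [idft_shift, idft_shift, inner1_idft_idft]
  congr 1
  refine sum_congr rfl fun n _ => ?_
  rw [sub_mul, sub_eq_neg_add, zpow_add₀ ww_ne_zero, map_mul, conj_ww_zpow, neg_neg]
  ring

lemma inner1_idft_two_shift {M : ℕ} {f g : ℕ → ℂ} {c : ℂ}
    (h : ∀ n < M, f n * conj (g n) + f (M + n) * conj (g (M + n)) = 2 * c)
    {l m : ℕ} (hl : l < M) (hm : m < M) :
    inner1 (2 * M) (fun k => idft (2 * M) f (k - 2 * (l : ℤ)))
      (fun k => idft (2 * M) g (k - 2 * (m : ℤ))) = if l = m then c else 0 := by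
  have hM : (M : ℂ) ≠ 0 := Nat.cast_ne_zero.2 (by omega)
  have hchar (n : ℕ) :
      ww (2 * M) ^ ((2 * (m : ℤ) - 2 * l) * n) = ww M ^ ((n : ℤ) * ((m : ℤ) - l)) := by
    rw [← ww_two_mul_zpow_two_mul (M := M)]
    ring_nf
  have hchar_half (n : ℕ) :
      ww M ^ (((M + n : ℕ) : ℤ) * ((m : ℤ) - l)) = ww M ^ ((n : ℤ) * ((m : ℤ) - l)) := by
    rw [Nat.cast_add, add_mul, zpow_add₀ ww_ne_zero, ww_zpow_natCast_mul, one_mul]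
  calc _ = ((2 * M : ℕ) : ℂ)⁻¹ * ∑ n ∈ range M,
        (f n * conj (g n) + f (M + n) * conj (g (M + n))) * ww M ^ ((n : ℤ) * ((m : ℤ) - l)) := by
        rw [inner1_idft_shift, two_mul M, sum_range_add, ← sum_add_distrib, ← two_mul M]
        simp only [hchar, hchar_half, add_mul]
    _ = ((2 * M : ℕ) : ℂ)⁻¹ * (2 * c * if l = m then (M : ℂ) else 0) := by
        rw [← sum_ww_zpow_mul_sub hl hm, mul_sum _ _ (2 * c)]
        congr 1
        exact sum_congr rfl fun n hn => by rw [h n (mem_range.1 hn)]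
    _ = if l = m then c else 0 := by
        split_ifs
        · push_cast
          field_simp
        · simp

end DiscreteFourierTransform

section ComplementaryOperator

variable {N : ℕ}

/-- The DFT multiplier of the complementary-WP operator `C`, for `0 ≤ n < N`. -/
noncomputable def cwpMult (N n : ℕ) : ℂ :=
  if n = 0 ∨ n = N / 2 then 1 else if n < N / 2 then -Complex.I else Complex.I

lemma cwpMult_mul_conj (N n : ℕ) : cwpMult N n * conj (cwpMult N n) = 1 := by
  unfold cwpMult
  split_ifs <;> simp

lemma cwpT_idft (f : ℕ → ℂ) : cwpT N (idft N f) = idft N fun n => cwpMult N n * f n := by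
  funext k
  rw [cwpT, idft]
  congr 1
  exact sum_congr rfl fun n hn => by rw [dft_idft f (mem_range.1 hn), cwpMult]

lemma inner1_cwpT_idft_shift (f g : ℕ → ℂ) (a b : ℤ) :
    inner1 N (fun k => cwpT N (idft N f) (k - a)) (fun k => cwpT N (idft N g) (k - b)) =
      inner1 N (fun k => idft N f (k - a)) (fun k => idft N g (k - b)) := by
  simp only [cwpT_idft, inner1_idft_shift]
  congr 1
  refine sum_congr rfl fun n _ => ?_
  rw [map_mul, mul_mul_mul_comm, cwpMult_mul_conj, one_mul]

end ComplementaryOperator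

section BSpline

lemma max_zero_pow {R : Type*} [CommRing R] [LinearOrder R] [IsOrderedRing R] {n : ℕ}
    (hn : n ≠ 0) (x : R) : max x 0 ^ n = x ^ n - (-1) ^ n * max (-x) 0 ^ n := by
  rcases le_total 0 x with hx | hx
  · simp [hx, hn]
  · simp [hx, hn, ← mul_pow]

lemma sum_neg_one_pow_mul_choose_mul_sub_pow {R : Type*} [CommRing R] {j p : ℕ} (hj : j < p)
    (s : R) : ∑ k ∈ range (p + 1), (-1) ^ k * (p.choose k : R) * (s - k) ^ j = 0 := by
  have hdiff := congrFun (fwdDiff_iter_pow_eq_zero_of_lt (R := R) hj) (s - p)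
  rw [fwdDiff_iter_eq_sum_shift, ← sum_flip] at hdiff
  rw [← Pi.zero_apply (M := fun _ : R => R) (s - p), ← hdiff]
  refine sum_congr rfl fun k hk => ?_
  have hkp : k ≤ p := mem_range_succ_iff.1 hk
  rw [Nat.sub_sub_self hkp, Nat.choose_symm hkp]
  simp [Nat.cast_sub hkp]

lemma bspline_neg {p : ℕ} (hp : 2 ≤ p) (t : ℝ) : bspline p (-t) = bspline p t := by
  have hsign {k : ℕ} (hk : k ≤ p) : (-1 : ℝ) ^ (p - k) = -((-1) ^ k * (-1) ^ (p - 1)) := by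
    rw [← pow_add, ← neg_one_mul (_ ^ _), ← pow_succ', neg_one_pow_congr]
    grind
  rw [bspline, bspline]
  congr 1
  calc _ = ∑ k ∈ range (p + 1), -((-1 : ℝ) ^ k * p.choose k * ((-1) ^ (p - 1) *
        max (-(t + p / 2 - k)) 0 ^ (p - 1))) := by
        rw [← sum_flip]
        refine sum_congr rfl fun k hk => ?_
        have hkp : k ≤ p := mem_range_succ_iff.1 hk
        rw [hsign hkp, Nat.choose_symm hkp, Nat.cast_sub hkp]
        ring_nf
    _ = ∑ k ∈ range (p + 1), ((-1 : ℝ) ^ k * p.choose k * max (t + p / 2 - k) 0 ^ (p - 1) -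
        (-1) ^ k * p.choose k * (t + p / 2 - k) ^ (p - 1)) := by
        refine sum_congr rfl fun k _ => ?_
        rw [max_zero_pow (by omega) (t + p / 2 - k)]
        ring
    _ = _ := by
        rw [sum_sub_distrib, sum_neg_one_pow_mul_choose_mul_sub_pow (by omega), sub_zero]

lemma bspline_eq_zero {p : ℕ} (hp : 2 ≤ p) {t : ℝ} (ht : (p : ℝ) / 2 ≤ |t|) :
    bspline p t = 0 := by
  wlog hneg : t ≤ 0 generalizing t
  · rw [← bspline_neg hp]
    exact this (by rwa [abs_neg]) (by linarith)
  rw [abs_of_nonpos hneg] at ht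
  rw [bspline, sum_eq_zero, mul_zero]
  intro k _
  have hk : (0 : ℝ) ≤ k := k.cast_nonneg
  rw [max_eq_right (by linarith [hk]), zero_pow (by omega), mul_zero]

end BSpline

section SplineSpectra

variable {M p : ℕ}

lemma bhat1_eq_sum (hp : 2 ≤ p) (hpM : p ≤ M) (n : ℤ) {s : Finset ℤ}
    (hs : Ioo (-(p : ℤ)) p ⊆ s) :
    bhat1 (2 * M) p n =
      ∑ k ∈ s, ww (2 * M) ^ (-(k * n)) * ((bspline p ((k : ℝ) / 2) : ℂ) / 2) := by
  have hvanish {k : ℤ} (hk : k ∉ Ioo (-(p : ℤ)) p) : bspline p ((k : ℝ) / 2) = 0 := by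
    have hpk : (p : ℤ) ≤ |k| := by grind
    refine bspline_eq_zero hp ?_
    rw [abs_div, abs_two]
    gcongr
    exact_mod_cast hpk
  have hM : ((2 * M : ℕ) : ℤ) / 2 = M := by omega
  calc bhat1 (2 * M) p n
      = ∑ k ∈ Ico (-(M : ℤ)) M,
          ww (2 * M) ^ (-(k * n)) * ((bspline p ((k : ℝ) / 2) : ℂ) / 2) := by
        rw [← sum_range_two_mul_sub, bhat1]
        refine sum_congr rfl fun k hk => ?_
        have hk' := mem_range.1 hk
        rw [bs1, hM, sub_add_cancel, Int.emod_eq_of_lt (by omega) (by omega)]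
    _ = ∑ k ∈ Ioo (-(p : ℤ)) p,
          ww (2 * M) ^ (-(k * n)) * ((bspline p ((k : ℝ) / 2) : ℂ) / 2) :=
        (sum_subset (by grind) fun k _ hk => by simp [hvanish hk]).symm
    _ = _ := sum_subset hs fun k _ hk => by simp [hvanish hk]

lemma conj_bhat1 (hp : 2 ≤ p) (hpM : p ≤ M) (n : ℤ) :
    conj (bhat1 (2 * M) p n) = bhat1 (2 * M) p n := by
  rw [bhat1_eq_sum hp hpM n Subset.rfl, map_sum]
  refine sum_nbij' (-·) (-·) (by grind) (by grind) (by simp) (by simp) fun k _ => ?_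
  rw [map_mul, conj_ww_zpow, Int.cast_neg, neg_div, bspline_neg hp, neg_mul]
  simp [map_ofNat]

lemma sum_range_ww_zpow_two_mul (g : ℝ → ℂ) (n : ℤ) :
    ∑ k ∈ range (2 * M), ww (2 * M) ^ (-(((k : ℤ) - (2 * M : ℕ) / 2) * (2 * n))) *
      g ((k : ℝ) - (2 * M : ℕ) / 2) = ∑ k ∈ Ico (-(M : ℤ)) M, ww M ^ (-(k * n)) * g k := by
  rw [← sum_range_two_mul_sub]
  refine sum_congr rfl fun k _ => ?_
  rw [← ww_two_mul_zpow_two_mul (M := M)]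
  push_cast
  rw [mul_div_cancel_left₀ (M : ℝ) two_ne_zero, Int.mul_ediv_cancel_left _ two_ne_zero]
  ring_nf

lemma uSeq_two_mul (n : ℤ) :
    uSeq (2 * M) p (2 * n) =
      ∑ k ∈ Ico (-(M : ℤ)) M, ww M ^ (-(k * n)) * (bspline p k : ℂ) :=
  sum_range_ww_zpow_two_mul (fun t => bspline p t) n

lemma vSeq_two_mul (n : ℤ) :
    vSeq (2 * M) p (2 * n) = ww (2 * M) ^ (-n) *
      ∑ k ∈ Ico (-(M : ℤ)) M, ww M ^ (-(k * n)) * (bspline p (k + 1 / 2) : ℂ) := by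
  have hphase : Complex.exp (-Real.pi * Complex.I * (2 * n : ℤ) / (2 * M : ℕ)) =
      ww (2 * M) ^ (-n) := by
    rw [ww, ← Complex.exp_int_mul]
    push_cast
    ring_nf
  rw [vSeq, hphase, sum_range_ww_zpow_two_mul fun t => bspline p (t + 1 / 2)]

lemma bhat1_eq_uSeq_add_vSeq (hp : 2 ≤ p) (hpM : p ≤ M) (n : ℤ) :
    bhat1 (2 * M) p n = (uSeq (2 * M) p (2 * n) + vSeq (2 * M) p (2 * n)) / 2 := by
  rw [bhat1_eq_sum hp hpM n (s := Ico (2 * -(M : ℤ)) (2 * M)) (by grind), sum_Ico_two_mul,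
    uSeq_two_mul, vSeq_two_mul, mul_sum, ← sum_add_distrib, sum_div]
  refine sum_congr rfl fun k _ => ?_
  have heven : ww (2 * M) ^ (-(2 * k * n)) = ww M ^ (-(k * n)) := by
    rw [← ww_two_mul_zpow_two_mul (M := M)]
    ring_nf
  have hodd : ww (2 * M) ^ (-((2 * k + 1) * n)) = ww (2 * M) ^ (-n) * ww M ^ (-(k * n)) := by
    rw [← heven, ← zpow_add₀ ww_ne_zero]
    ring_nf
  rw [heven, hodd]
  push_cast
  rw [add_div, mul_div_cancel_left₀ _ two_ne_zero]
  ring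

lemma uSeq_add_half (n : ℤ) : uSeq (2 * M) p (2 * (n + M)) = uSeq (2 * M) p (2 * n) := by
  simp only [uSeq_two_mul, ww_zpow_mul_add_period]

lemma vSeq_add_half (hM : M ≠ 0) (n : ℤ) :
    vSeq (2 * M) p (2 * (n + M)) = -vSeq (2 * M) p (2 * n) := by
  have hphase : ww (2 * M) ^ (-(n + M : ℤ)) = -ww (2 * M) ^ (-n) := by
    rw [neg_add, zpow_add₀ ww_ne_zero, zpow_neg _ (M : ℤ), ww_two_mul_zpow_self hM]
    norm_num
  simp only [vSeq_two_mul, ww_zpow_mul_add_period, hphase, neg_mul]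

lemma upsilon_add_half (hM : M ≠ 0) (n : ℤ) :
    upsilon (2 * M) p (n + M) = upsilon (2 * M) p n := by
  rw [upsilon, upsilon, uSeq_add_half, vSeq_add_half hM, neg_sq]

lemma bhat1_add_half (hp : 2 ≤ p) (hpM : p ≤ M) (n : ℤ) :
    bhat1 (2 * M) p (n + M) = (uSeq (2 * M) p (2 * n) - vSeq (2 * M) p (2 * n)) / 2 := by
  rw [bhat1_eq_uSeq_add_vSeq hp hpM, uSeq_add_half, vSeq_add_half (by omega), sub_eq_add_neg]

end SplineSpectra

section WaveletPackets

variable {M p : ℕ}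

lemma betaS_add_period (hp : 2 ≤ p) (hpM : p ≤ M) (n : ℤ) :
    betaS (2 * M) p (n + M + M) = betaS (2 * M) p n := by
  have hM : M ≠ 0 := by omega
  rw [betaS, betaS, bhat1_add_half hp hpM, uSeq_add_half, vSeq_add_half hM, sub_neg_eq_add,
    ← bhat1_eq_uSeq_add_vSeq hp hpM, upsilon_add_half hM, upsilon_add_half hM]

lemma conj_betaS (hp : 2 ≤ p) (hpM : p ≤ M) {n : ℤ} (h : 0 ≤ upsilon (2 * M) p n) :
    conj (betaS (2 * M) p n) = betaS (2 * M) p n := by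
  rw [betaS, one_div, ← Complex.sqrt, Complex.sqrt_of_nonneg h, map_div₀, conj_bhat1 hp hpM,
    Complex.conj_ofReal]

lemma betaS_sq (N p : ℕ) (n : ℤ) : betaS N p n ^ 2 = bhat1 N p n ^ 2 / upsilon N p n := by
  rw [betaS, div_pow, one_div, Complex.cpow_ofNat_inv_pow]

lemma betaS_sq_add_sq (hp : 2 ≤ p) (hpM : p ≤ M) {n : ℤ} (h : upsilon (2 * M) p n ≠ 0) :
    betaS (2 * M) p n ^ 2 + betaS (2 * M) p (n + M) ^ 2 = 2 := by
  rw [betaS_sq, betaS_sq, upsilon_add_half (by omega), bhat1_eq_uSeq_add_vSeq hp hpM n,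
    bhat1_add_half hp hpM, ← add_div, div_eq_iff h, upsilon]
  ring

lemma alphaS_eq (n : ℤ) :
    alphaS (2 * M) p n = ww (2 * M) ^ n * betaS (2 * M) p (n + M) := by
  rw [alphaS, Nat.cast_mul, Nat.cast_two, Int.mul_ediv_cancel_left _ two_ne_zero]

lemma alphaS_add_half (hp : 2 ≤ p) (hpM : p ≤ M) (n : ℤ) :
    alphaS (2 * M) p (n + M) = -(ww (2 * M) ^ n * betaS (2 * M) p n) := by
  rw [alphaS_eq, betaS_add_period hp hpM, zpow_add₀ ww_ne_zero, ww_two_mul_zpow_self (by omega)]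
  ring

/-- The DFT of the first-level wavelet packet `ψ_{[1],λ}`. As in `psi1`, every `lam ≠ 0` stands
for `λ = 1`. -/
noncomputable def psiHat (N p lam : ℕ) (n : ℤ) : ℂ :=
  if lam = 0 then betaS N p n else alphaS N p n

lemma psi1_eq_idft (N p lam : ℕ) : psi1 N p lam = idft N fun n => psiHat N p lam n := rfl

lemma psiHat_mul_conj_add_half (hp : 2 ≤ p) (hpM : p ≤ M)
    (hpos : ∀ n : ℤ, 0 < upsilon (2 * M) p n) {lam mu : ℕ} (hlam : lam < 2) (hmu : mu < 2)
    (n : ℤ) :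
    psiHat (2 * M) p lam n * conj (psiHat (2 * M) p mu n) +
      psiHat (2 * M) p lam (n + M) * conj (psiHat (2 * M) p mu (n + M)) =
    2 * if lam = mu then 1 else 0 := by
  have hsq := betaS_sq_add_sq hp hpM (hpos n).ne'
  have hreal (j : ℤ) := conj_betaS hp hpM (hpos j).le
  have hunit : ww (2 * M) ^ n * conj (ww (2 * M) ^ n) = 1 := by
    rw [conj_ww_zpow, ← zpow_add₀ ww_ne_zero, add_neg_cancel, zpow_zero]
  interval_cases lam <;> interval_cases mu <;>
    simp only [psiHat, if_true, one_ne_zero, zero_ne_one, if_false, alphaS_eq n,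
      alphaS_add_half hp hpM, map_mul, map_neg, hreal]
  · linear_combination hsq
  · ring
  · ring
  · linear_combination hsq + (betaS (2 * M) p n ^ 2 + betaS (2 * M) p (n + M) ^ 2) * hunit

lemma inner1_psi1_two_shift (hp : 2 ≤ p) (hpM : p ≤ M)
    (hpos : ∀ n : ℤ, 0 < upsilon (2 * M) p n) {lam mu : ℕ} (hlam : lam < 2) (hmu : mu < 2)
    {l m : ℕ} (hl : l < M) (hm : m < M) :
    inner1 (2 * M) (fun k => psi1 (2 * M) p lam (k - 2 * (l : ℤ)))
      (fun k => psi1 (2 * M) p mu (k - 2 * (m : ℤ))) =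
    if lam = mu ∧ l = m then 1 else 0 := by
  simp only [psi1_eq_idft]
  rw [inner1_idft_two_shift (c := if lam = mu then 1 else 0) (fun n _ => ?_) hl hm]
  · simp only [← ite_and, and_comm]
  rw [Nat.cast_add, add_comm (M : ℤ)]
  exact psiHat_mul_conj_add_half hp hpM hpos hlam hmu n

lemma inner1_cwpT_psi1_two_shift (hp : 2 ≤ p) (hpM : p ≤ M)
    (hpos : ∀ n : ℤ, 0 < upsilon (2 * M) p n) {lam mu : ℕ} (hlam : lam < 2) (hmu : mu < 2)
    {l m : ℕ} (hl : l < M) (hm : m < M) :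
    inner1 (2 * M) (fun k => cwpT (2 * M) (psi1 (2 * M) p lam) (k - 2 * (l : ℤ)))
      (fun k => cwpT (2 * M) (psi1 (2 * M) p mu) (k - 2 * (m : ℤ))) =
    if lam = mu ∧ l = m then 1 else 0 :=
  (inner1_cwpT_idft_shift _ _ _ _).trans (inner1_psi1_two_shift hp hpM hpos hlam hmu hl hm)

end WaveletPackets

section OrthogonalProjection

variable {ι : Type*} {s : Finset ι}

lemma sum_mul_mem_span {α R : Type*} [Semiring R] {S : Set (α → R)} {e : ι → α → R}
    (he : ∀ i ∈ s, e i ∈ S) (c : ι → R) :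
    (fun k => ∑ i ∈ s, c i * e i k) ∈ Submodule.span R S := by
  have hsum : (fun k => ∑ i ∈ s, c i * e i k) = ∑ i ∈ s, c i • e i := by
    funext k
    simp
  rw [hsum]
  exact Submodule.sum_smul_mem _ _ fun i hi => Submodule.subset_span (he i hi)

lemma inner1_sub_sum_mul_left (N : ℕ) (s : Finset ι) (x y : ℤ → ℂ) (c : ι → ℂ)
    (e : ι → ℤ → ℂ) :
    inner1 N (fun k => x k - ∑ i ∈ s, c i * e i k) y =
      inner1 N x y - ∑ i ∈ s, c i * inner1 N (e i) y := by
  simp only [inner1, sub_mul, sum_sub_distrib, sum_mul, mul_sum, mul_assoc]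
  rw [sum_comm]

lemma inner1_sub_sum_inner1_mul_eq_zero [DecidableEq ι] {N : ℕ} {e : ι → ℤ → ℂ}
    (he : ∀ i ∈ s, ∀ j ∈ s, inner1 N (e i) (e j) = if i = j then 1 else 0) (x : ℤ → ℂ) {j : ι}
    (hj : j ∈ s) : inner1 N (fun k => x k - ∑ i ∈ s, inner1 N x (e i) * e i k) (e j) = 0 := by
  rw [inner1_sub_sum_mul_left, sum_congr rfl fun i hi => by rw [he i hi j hj]]
  simp [hj]

end OrthogonalProjection

end Development

/-- The 2-sample shifts of the complementary wavelet packets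
    φ_{[1],λ}^p = C(ψ_{[1],λ}^p) form an orthonormal basis of Π[N]; consequently the
    orthogonal projection of x onto the span of {φ_{[1],λ}^p[·−2l]} equals
    Σ_l ⟨x, φ_{[1],λ}^p[·−2l]⟩ φ_{[1],λ}^p[·−2l]. -/
theorem cwp_psi1_orthonormal_basis_and_projection (N p : ℕ) (hN : 0 < N) (hNe : Even N)
    (hp : 2 ≤ p) (hpN : p ≤ N / 2)
    (hpos : ∀ n : ℤ, 0 < uSeq N p (2 * n) ^ 2 + vSeq N p (2 * n) ^ 2) :
    (∀ lam mu : ℕ, lam < 2 → mu < 2 → ∀ l m : ℕ, l < N / 2 → m < N / 2 →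
      inner1 N (fun k => cwpT N (psi1 N p lam) (k - 2 * (l : ℤ)))
          (fun k => cwpT N (psi1 N p mu) (k - 2 * (m : ℤ)))
        = if lam = mu ∧ l = m then 1 else 0) ∧
    (∀ x : ℤ → ℂ, (∀ k : ℤ, x (k + N) = x k) → ∀ lam : ℕ, lam < 2 →
      ((fun k : ℤ => ∑ l ∈ Finset.range (N / 2),
            inner1 N x (fun j => cwpT N (psi1 N p lam) (j - 2 * (l : ℤ))) *
              cwpT N (psi1 N p lam) (k - 2 * (l : ℤ)))
          ∈ Submodule.span ℂ
              {g : ℤ → ℂ | ∃ l : ℕ, l < N / 2 ∧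
                g = fun k => cwpT N (psi1 N p lam) (k - 2 * (l : ℤ))}) ∧
      (∀ l : ℕ, l < N / 2 →
        inner1 N
          (fun k => x k - ∑ l' ∈ Finset.range (N / 2),
              inner1 N x (fun j => cwpT N (psi1 N p lam) (j - 2 * (l' : ℤ))) *
                cwpT N (psi1 N p lam) (k - 2 * (l' : ℤ)))
          (fun k => cwpT N (psi1 N p lam) (k - 2 * (l : ℤ))) = 0)) := by
  obtain ⟨M, rfl⟩ := hNe.two_dvd
  rw [Nat.mul_div_cancel_left M two_pos] at hpN ⊢
  have hUpsilon (n : ℤ) : 0 < upsilon (2 * M) p n := div_pos (hpos n) four_pos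
  refine ⟨fun lam mu hlam hmu l m hl hm =>
    inner1_cwpT_psi1_two_shift hp hpN hUpsilon hlam hmu hl hm, fun x _ lam hlam => ?_⟩
  let φ (l : ℕ) (k : ℤ) : ℂ := cwpT (2 * M) (psi1 (2 * M) p lam) (k - 2 * l)
  have hφ : ∀ l ∈ Finset.range M, ∀ m ∈ Finset.range M,
      inner1 (2 * M) (φ l) (φ m) = if l = m then 1 else 0 := fun l hl m hm => by
    simpa only [true_and] using inner1_cwpT_psi1_two_shift hp hpN hUpsilon hlam hlam
      (Finset.mem_range.1 hl) (Finset.mem_range.1 hm)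
  refine ⟨sum_mul_mem_span (e := φ) (fun l hl => ?_) _,
    fun l hl => inner1_sub_sum_inner1_mul_eq_zero hφ x (Finset.mem_range.2 hl)⟩
  exact ⟨l, Finset.mem_range.1 hl, rfl⟩

end WP
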